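/- Let Γ be a crystallographic group acting isometrically, properly discontinuously and cocompactly on ℝ^m (a Bieberbach group). Then the subgroup A₀ of pure translations in Γ is free abelian of rank m, has finite index in Γ, and is the unique maximal normal free abelian subgroup; consequently there is a short exact sequence 1 → A₀ → Γ → T → 1 with T finite. -/

import Mathlib

/-- The subgroup of pure translations of a group acting on `ℝ^m`. -/
def transSub (m : ℕ) (G : Type*) [Group G]
    [MulAction G (EuclideanSpace ℝ (Fin m))] : Subgroup G where
  carrier := {g : G | ∃ v : EuclideanSpace ℝ (Fin m), ∀ x, g • x = x + v}
  one_mem' := ⟨0, fun x => by simp⟩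
  mul_mem' := by
    rintro a b ⟨v, hv⟩ ⟨w, hw⟩
    exact ⟨w + v, fun x => by rw [mul_smul, hw, hv, add_assoc]⟩
  inv_mem' := by
    rintro g ⟨v, hv⟩
    refine ⟨-v, fun x => ?_⟩
    have h1 : g • (x + -v) = x := by rw [hv]; abel
    calc g⁻¹ • x = g⁻¹ • (g • (x + -v)) := by rw [h1]
      _ = x + -v := inv_smul_smul g _

theorem exists_minimal_translation_part {E G : Type*} [NormedAddCommGroup E] {t : G → E}
    (hfin : ∀ R : ℝ, {g | ‖t g‖ ≤ R}.Finite) {P : G → Prop} (hP : ∃ g, P g) :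
    ∃ g, P g ∧ ∀ h, P h → ‖t g‖ ≤ ‖t h‖ := by
  obtain ⟨g₀, hg₀⟩ := hP
  obtain ⟨g, ⟨hgP, hg⟩, hmin⟩ := Set.exists_min_image {g | P g ∧ ‖t g‖ ≤ ‖t g₀‖} (fun g => ‖t g‖)
    ((hfin ‖t g₀‖).subset fun g hg => hg.2) ⟨g₀, hg₀, le_rfl⟩
  refine ⟨g, hgP, fun h hh => ?_⟩
  rcases le_total ‖t h‖ ‖t g₀‖ with h1 | h1
  · exact hmin h ⟨hh, h1⟩
  · exact hg.trans h1

section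

open Metric Filter Topology RealInnerProductSpace

variable {E : Type*} [NormedAddCommGroup E] [InnerProductSpace ℝ E]

theorem exists_norm_sub_le_on_submodule [FiniteDimensional ℝ E] (A : E ≃ₗᵢ[ℝ] E) (F : Submodule ℝ E)
    (hF : F ≠ ⊥) : ∃ x₀ ∈ F, ‖x₀‖ = 1 ∧ ∀ x ∈ F, ‖A x - x‖ ≤ ‖A x₀ - x₀‖ * ‖x‖ := by
  have hc : IsCompact (sphere (0 : E) 1 ∩ F) :=
    (isCompact_sphere 0 1).inter_right F.closed_of_finiteDimensional
  obtain ⟨y, hyF, hy⟩ := F.exists_mem_ne_zero_of_ne_bot hF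
  have hne : (sphere (0 : E) 1 ∩ F).Nonempty :=
    ⟨(‖y‖⁻¹ : ℝ) • y, by simp [norm_smul, hy], F.smul_mem _ hyF⟩
  obtain ⟨x₀, ⟨hx₀, hx₀F⟩, hmax⟩ := hc.exists_isMaxOn hne
    (f := fun x => ‖A x - x‖) (by fun_prop)
  refine ⟨x₀, hx₀F, by simpa using hx₀, fun x hx => ?_⟩
  by_cases h0 : x = 0
  · simp [h0]
  have hx' : 0 < ‖x‖ := norm_pos_iff.2 h0
  have h := hmax (show (‖x‖⁻¹ : ℝ) • x ∈ sphere (0 : E) 1 ∩ F from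
    ⟨by simp [norm_smul, h0], F.smul_mem _ hx⟩)
  simp only [Set.mem_ofPred_eq, map_smul, ← smul_sub, norm_smul, norm_inv, norm_norm] at h
  rwa [inv_mul_le_iff₀ hx', mul_comm] at h

theorem inner_displacement (A : E ≃ₗᵢ[ℝ] E) (x y : E) :
    ⟪A x - x, A y - y⟫ = ⟪(2 : ℝ) • x - A x - A.symm x, y⟫ := by
  have h1 : ⟪A x, A y⟫ = ⟪x, y⟫ := A.inner_map_map x y
  have h2 : ⟪x, A y⟫ = ⟪A.symm x, y⟫ := by
    rw [← A.inner_map_map (A.symm x) y, A.apply_symm_apply]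
  simp only [inner_sub_left, inner_sub_right, inner_smul_left, h1, h2]
  simp
  ring

/-- The vectors whose displacement under `A` is governed by the eigenvalue `M ^ 2` of
`2 - A - A⁻¹`. -/
def displacementEigenspace (A : E ≃ₗᵢ[ℝ] E) (M : ℝ) : Submodule ℝ E where
  carrier := {x | (2 : ℝ) • x - A x - A.symm x = M ^ 2 • x}
  zero_mem' := by simp
  add_mem' := by
    intro x y hx hy
    simp only [Set.mem_ofPred_eq, map_add, smul_add] at *
    rw [← hx, ← hy]; abel
  smul_mem' := by
    intro c x hx
    simp only [Set.mem_ofPred_eq, map_smul] at *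
    rw [smul_comm (M ^ 2), ← hx]
    simp only [smul_sub, smul_comm c]

theorem mem_displacementEigenspace {A : E ≃ₗᵢ[ℝ] E} {M : ℝ} {x : E} :
    x ∈ displacementEigenspace A M ↔ (2 : ℝ) • x - A x - A.symm x = M ^ 2 • x := Iff.rfl

theorem map_mem_displacementEigenspace {A : E ≃ₗᵢ[ℝ] E} {M : ℝ} {x : E}
    (hx : x ∈ displacementEigenspace A M) : A x ∈ displacementEigenspace A M := by
  have h := congrArg A (mem_displacementEigenspace.1 hx)
  rw [mem_displacementEigenspace]
  simpa using h

theorem symm_mem_displacementEigenspace {A : E ≃ₗᵢ[ℝ] E} {M : ℝ} {x : E}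
    (hx : x ∈ displacementEigenspace A M) : A.symm x ∈ displacementEigenspace A M := by
  have h := congrArg A.symm (mem_displacementEigenspace.1 hx)
  rw [mem_displacementEigenspace]
  simpa using h

theorem norm_sub_of_mem_displacementEigenspace {A : E ≃ₗᵢ[ℝ] E} {M : ℝ} (hM : 0 ≤ M) {x : E}
    (hx : x ∈ displacementEigenspace A M) : ‖A x - x‖ = M * ‖x‖ := by
  have h := inner_displacement A x x
  rw [mem_displacementEigenspace.1 hx, inner_smul_left, real_inner_self_eq_norm_sq,
    real_inner_self_eq_norm_sq] at h
  simp only [conj_trivial, ← mul_pow] at h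
  exact (pow_left_inj₀ (norm_nonneg _) (by positivity) two_ne_zero).1 h

theorem mem_displacementEigenspace_of_norm_sub_eq {A : E ≃ₗᵢ[ℝ] E} {M : ℝ} (hM : 0 < M)
    (hA : ∀ x, ‖A x - x‖ ≤ M * ‖x‖) {x : E} (hx : ‖A x - x‖ = M * ‖x‖) :
    x ∈ displacementEigenspace A M := by
  rw [mem_displacementEigenspace, ← sub_eq_zero]
  set z := (2 : ℝ) • x - A x - A.symm x - M ^ 2 • x with hz
  set s : ℝ := 1 / M ^ 2 with hs
  have hsM : s * M ^ 2 = 1 := by rw [hs]; field_simp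
  have h1 : ‖A (x + s • z) - (x + s • z)‖ ^ 2 ≤ (M * ‖x + s • z‖) ^ 2 := by
    gcongr; exact hA _
  have e1 : A (x + s • z) - (x + s • z) = (A x - x) + s • (A z - z) := by
    simp only [map_add, map_smul, smul_sub]; abel
  have e2 : ⟪A x - x, A z - z⟫ = ‖z‖ ^ 2 + M ^ 2 * ⟪x, z⟫ := by
    rw [inner_displacement, ← real_inner_self_eq_norm_sq]
    have : (2 : ℝ) • x - A x - A.symm x = z + M ^ 2 • x := by rw [hz]; abel
    rw [this, inner_add_left, inner_smul_left]; simp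
  rw [e1, mul_pow, norm_add_sq_real, norm_add_sq_real, inner_smul_right, inner_smul_right, e2, hx,
    norm_smul, norm_smul, Real.norm_of_nonneg (by positivity : 0 ≤ s)] at h1
  have h3 : s * ‖z‖ ^ 2 ≤ 0 := by
    have e3 : M ^ 2 * (s * ‖z‖) ^ 2 = s * ‖z‖ ^ 2 := by
      linear_combination (s * ‖z‖ ^ 2) * hsM
    have h4 : 0 ≤ (s * ‖A z - z‖) ^ 2 := by positivity
    linarith
  have hs0 : 0 < s := by positivity
  have : ‖z‖ ^ 2 ≤ 0 := nonpos_of_mul_nonpos_right h3 hs0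
  simpa using le_antisymm this (by positivity)

theorem exists_displacement_splitting [FiniteDimensional ℝ E] {A : E ≃ₗᵢ[ℝ] E} (hA : A ≠ 1) :
    ∃ (M M' : ℝ) (F : Submodule ℝ E), 0 ≤ M' ∧ M' < M ∧
      (∃ x, x ≠ 0 ∧ ‖A x - x‖ = M * ‖x‖) ∧ F ≠ ⊥ ∧ (∀ x, ‖A x - x‖ ≤ M * ‖x‖) ∧
      (∀ x ∈ F, A x ∈ F) ∧ (∀ x ∈ F, ‖A x - x‖ = M * ‖x‖) ∧
      (∀ x ∈ Fᗮ, A x ∈ Fᗮ) ∧ (∀ x ∈ Fᗮ, ‖A x - x‖ ≤ M' * ‖x‖) := by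
  obtain ⟨y, hy⟩ : ∃ y, A y ≠ y := by
    by_contra! h
    exact hA (LinearIsometryEquiv.ext h)
  have htop : (⊤ : Submodule ℝ E) ≠ ⊥ := by
    intro h
    have : y ∈ (⊥ : Submodule ℝ E) := h ▸ Submodule.mem_top
    rw [Submodule.mem_bot] at this
    simp [this] at hy
  obtain ⟨x₀, -, hx₀, hmax⟩ := exists_norm_sub_le_on_submodule A ⊤ htop
  set M := ‖A x₀ - x₀‖ with hMdef
  have hmax' : ∀ x, ‖A x - x‖ ≤ M * ‖x‖ := fun x => hmax x Submodule.mem_top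
  have hM : 0 < M := by
    have h1 : 0 < ‖A y - y‖ := norm_pos_iff.2 (sub_ne_zero.2 hy)
    exact pos_of_mul_pos_left (h1.trans_le (hmax' y)) (norm_nonneg _)
  have hx₀' : x₀ ≠ 0 := by rintro rfl; simp at hx₀
  have hMx : ‖A x₀ - x₀‖ = M * ‖x₀‖ := by rw [hx₀, mul_one]
  have hx₀F := mem_displacementEigenspace_of_norm_sub_eq hM hmax' hMx
  set F := displacementEigenspace A M with hF
  have hbot : F ≠ ⊥ := fun h => hx₀' (by rw [h] at hx₀F; simpa using hx₀F)
  obtain ⟨M', hnonneg, hlt, hM'⟩ :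
      ∃ M', 0 ≤ M' ∧ M' < M ∧ ∀ x ∈ Fᗮ, ‖A x - x‖ ≤ M' * ‖x‖ := by
    by_cases hperp : Fᗮ = ⊥
    · refine ⟨0, le_rfl, hM, fun x hx => ?_⟩
      rw [hperp, Submodule.mem_bot] at hx
      simp [hx]
    obtain ⟨x₁, hx₁F, hx₁, hmax₁⟩ := exists_norm_sub_le_on_submodule A Fᗮ hperp
    refine ⟨_, norm_nonneg _, lt_of_le_of_ne (by simpa [hx₁] using hmax' x₁) fun h => ?_, hmax₁⟩
    have h1 : x₁ ∈ F := mem_displacementEigenspace_of_norm_sub_eq hM hmax' (by rw [hx₁, mul_one, h])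
    have h2 : x₁ = 0 := by
      simpa using (Submodule.mem_orthogonal F x₁).1 hx₁F x₁ h1
    simp [h2] at hx₁
  refine ⟨M, M', F, hnonneg, hlt, ⟨x₀, hx₀', hMx⟩, hbot, hmax',
    fun x hx => map_mem_displacementEigenspace hx,
    fun x hx => norm_sub_of_mem_displacementEigenspace hM.le hx, fun x hx => ?_, hM'⟩
  rw [Submodule.mem_orthogonal] at hx ⊢
  intro u hu
  rw [← A.apply_symm_apply u, A.inner_map_map]
  exact hx _ (symm_mem_displacementEigenspace hu)

end

section

open Metric Filter Topology RealInnerProductSpace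

variable {E : Type*} [NormedAddCommGroup E] [InnerProductSpace ℝ E]
  {G : Type*} [Group G] {L : G →* (E ≃ₗᵢ[ℝ] E)} {t : G → E}

theorem exists_frequently_linear_part_near [FiniteDimensional ℝ E] (L : G →* (E ≃ₗᵢ[ℝ] E))
    (g : ℕ → G) {ε : ℝ} (hε : 0 < ε) :
    ∃ i, ∃ᶠ j in atTop, ∀ x, ‖L (g j * (g i)⁻¹) x - x‖ ≤ ε * ‖x‖ := by
  let f : ℕ → E →L[ℝ] E := fun k => (L (g k)).toContinuousLinearEquiv
  have hf : ∀ k, f k ∈ closedBall (0 : E →L[ℝ] E) 1 := fun k => by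
    rw [mem_closedBall_zero_iff]
    exact (f k).opNorm_le_bound zero_le_one fun x => by simp [f]
  obtain ⟨l, -, φ, hφ, hl⟩ := tendsto_subseq_of_bounded isBounded_closedBall hf
  obtain ⟨N, hN⟩ := Metric.cauchySeq_iff'.1 hl.cauchySeq ε hε
  refine ⟨φ N, ?_⟩
  rw [frequently_atTop]
  intro a
  refine ⟨φ (max a N), (le_max_left a N).trans (hφ.le_apply), fun x => ?_⟩
  have h1 : ‖f (φ (max a N)) - f (φ N)‖ ≤ ε := by
    rw [← dist_eq_norm]; exact (hN _ (le_max_right a N)).le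
  have h2 := (f (φ (max a N)) - f (φ N)).le_of_opNorm_le h1 ((L (g (φ N)))⁻¹ x)
  have e1 : f (φ N) ((L (g (φ N)))⁻¹ x) = x := (L (g (φ N))).apply_symm_apply x
  have e2 : ‖(L (g (φ N)))⁻¹ x‖ = ‖x‖ := (L (g (φ N))).symm.norm_map x
  rw [sub_apply, e1, e2] at h2
  simpa [f] using h2

theorem map_inv_cocycle (ht : ∀ g h, t (g * h) = t g + L g (t h)) (g h : G) :
    t (g * h⁻¹) = t g - L (g * h⁻¹) (t h) := by
  rw [eq_sub_iff_add_eq, ← ht, inv_mul_cancel_right]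

theorem exists_almost_translation [FiniteDimensional ℝ E]
    (ht : ∀ g h, t (g * h) = t g + L g (t h))
    {D : ℝ} (hD : ∀ x, ∃ g, ‖t g - x‖ ≤ D) (u : E) {ε : ℝ} (hε : 0 < ε) :
    ∃ (g : G) (s : ℝ), 0 < s ∧ ‖t g - s • u‖ ≤ ε * s ∧ ∀ x, ‖L g x - x‖ ≤ ε * ‖x‖ := by
  choose g hg using fun k : ℕ => hD ((k : ℝ) • u)
  obtain ⟨i, hi⟩ := exists_frequently_linear_part_near L g hε
  have hlarge : ∀ᶠ j : ℕ in atTop, (D + ‖t (g i)‖) / ε ≤ (j : ℝ) ∧ 1 ≤ j :=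
    (tendsto_natCast_atTop_atTop.eventually_ge_atTop _).and (eventually_ge_atTop 1)
  obtain ⟨j, hj, hjD, hj1⟩ := (hi.and_eventually hlarge).exists
  refine ⟨g j * (g i)⁻¹, j, by exact_mod_cast hj1, ?_, hj⟩
  rw [div_le_iff₀' hε] at hjD
  rw [map_inv_cocycle ht]
  calc ‖t (g j) - L (g j * (g i)⁻¹) (t (g i)) - (j : ℝ) • u‖
      = ‖(t (g j) - (j : ℝ) • u) - L (g j * (g i)⁻¹) (t (g i))‖ := by congr 1; abel
    _ ≤ D + ‖t (g i)‖ := (norm_sub_le _ _).trans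
        (add_le_add (hg j) (LinearIsometryEquiv.norm_map _ _).le)
    _ ≤ _ := hjD

theorem norm_commutator_sub_le {A B : E ≃ₗᵢ[ℝ] E} {M c : ℝ} (hM : 0 ≤ M) (hc : 0 ≤ c)
    (hA : ∀ x, ‖A x - x‖ ≤ M * ‖x‖) (hB : ∀ x, ‖B x - x‖ ≤ c * ‖x‖) (x : E) :
    ‖(A * B * A⁻¹ * B⁻¹) x - x‖ ≤ 2 * M * c * ‖x‖ := by
  set y := (B * A)⁻¹ x with hy
  have hx : x = B (A y) := ((B * A).apply_symm_apply x).symm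
  have hnorm : ‖x‖ = ‖y‖ := by rw [hx]; simp
  have e : (A * B * A⁻¹ * B⁻¹) x - x
      = (A (B y - y) - (B y - y)) - (B (A y - y) - (A y - y)) := by
    have : (A * B * A⁻¹ * B⁻¹) x = A (B y) := by
      rw [hy, mul_inv_rev]; rfl
    rw [this]
    nth_rewrite 1 [hx]
    simp only [map_sub]; abel
  rw [e, hnorm]
  calc _ ≤ M * (c * ‖y‖) + c * (M * ‖y‖) := (norm_sub_le _ _).trans (add_le_add
        ((hA _).trans (by gcongr; exact hB _)) ((hB _).trans (by gcongr; exact hA _)))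
    _ = _ := by ring

theorem map_commutator_cocycle (ht : ∀ g h, t (g * h) = t g + L g (t h)) (a b : G) :
    t (a * b * a⁻¹ * b⁻¹) = (L a (t b) - t b) -
      ((L (a * b * a⁻¹ * b⁻¹) (t b) - t b) +
        L a (L b ((L a)⁻¹ (t a)) - (L a)⁻¹ (t a))) := by
  have h : a * b * a⁻¹ * b⁻¹ = a * b * (b * a)⁻¹ := by group
  have e1 : L (a * b * a⁻¹ * b⁻¹) (L b (t a)) = L a (L b ((L a)⁻¹ (t a))) := by
    rw [map_mul, map_mul, map_mul, map_inv, map_inv]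
    exact congrArg (fun x => L a (L b ((L a)⁻¹ x))) ((L b).symm_apply_apply (t a))
  have e2 : L a ((L a)⁻¹ (t a)) = t a := (L a).apply_symm_apply _
  have h1 := map_inv_cocycle ht (a * b) (b * a)
  rw [← h, ht a b, ht b a, map_add, e1] at h1
  rw [h1, map_sub, e2]
  abel

/-- Commutation with an element `a` whose linear part is close to the identity shortens an almost
translation `b` along the directions that `a` displaces most. -/
theorem commutator_shortens [FiniteDimensional ℝ E] (ht : ∀ g h, t (g * h) = t g + L g (t h))
    {a b : G} {M M' c : ℝ} {F : Submodule ℝ E} (hM' : 0 ≤ M') (hMM : M' < M) (hM2 : M ≤ 1 / 2)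
    (hc : 8 * c = M - M')
    (hA : ∀ x, ‖L a x - x‖ ≤ M * ‖x‖)
    (hF : ∀ x ∈ F, L a x ∈ F) (hFM : ∀ x ∈ F, ‖L a x - x‖ = M * ‖x‖)
    (hFp : ∀ x ∈ Fᗮ, L a x ∈ Fᗮ) (hFpM : ∀ x ∈ Fᗮ, ‖L a x - x‖ ≤ M' * ‖x‖)
    (hab : L b ≠ 1 → ‖t a‖ ≤ ‖t b‖) (hb0 : t b ≠ 0) (hB : ∀ x, ‖L b x - x‖ ≤ c * ‖x‖)
    (hbF : ‖Fᗮ.starProjection (t b)‖ ≤ ‖F.starProjection (t b)‖) :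
    ∃ b', t b' ≠ 0 ∧ (∀ x, ‖L b' x - x‖ ≤ c * ‖x‖) ∧
      ‖Fᗮ.starProjection (t b')‖ ≤ ‖F.starProjection (t b')‖ ∧ ‖t b'‖ < ‖t b‖ := by
  have hc0 : 0 < c := by linarith
  have hM0 : 0 < M := by linarith
  have hcomm : ∀ x, ‖L (a * b * a⁻¹ * b⁻¹) x - x‖ ≤ 2 * M * c * ‖x‖ := by
    simpa only [map_mul, map_inv] using norm_commutator_sub_le hM0.le hc0.le hA hB
  have htb' := map_commutator_cocycle ht a b
  set b' := a * b * a⁻¹ * b⁻¹ with hb'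
  set r := (L b' (t b) - t b) + L a (L b ((L a)⁻¹ (t a)) - (L a)⁻¹ (t a)) with hr
  have htb0 : 0 < ‖t b‖ := norm_pos_iff.2 hb0
  have h2M : 2 * M * c ≤ c := by nlinarith
  have hrb : ‖r‖ ≤ 2 * c * ‖t b‖ := by
    by_cases hLb : L b = 1
    · have hLb' : L b' = 1 := by simp [hb', hLb]
      have : r = 0 := by rw [hr, hLb, hLb']; simp
      rw [this, norm_zero]; positivity
    · have h1 : ‖L a (L b ((L a)⁻¹ (t a)) - (L a)⁻¹ (t a))‖ ≤ c * ‖t b‖ := by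
        rw [LinearIsometryEquiv.norm_map]
        refine (hB _).trans ?_
        rw [show ‖(L a)⁻¹ (t a)‖ = ‖t a‖ from (L a).symm.norm_map _]
        gcongr
        exact hab hLb
      have h2 : ‖L b' (t b) - t b‖ ≤ c * ‖t b‖ := (hcomm _).trans (by gcongr)
      calc ‖r‖ ≤ _ := norm_add_le _ _
        _ ≤ c * ‖t b‖ + c * ‖t b‖ := add_le_add h2 h1
        _ = _ := by ring
  set p := F.starProjection (t b) with hp
  set q := Fᗮ.starProjection (t b) with hq
  have hpF : p ∈ F := F.starProjection_apply_mem _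
  have hqF : q ∈ Fᗮ := Fᗮ.starProjection_apply_mem _
  have hpq : t b = p + q := (F.starProjection_add_starProjection_orthogonal (t b)).symm
  have hle : ‖t b‖ ≤ 2 * ‖p‖ := by
    rw [hpq]; exact (norm_add_le _ _).trans (by linarith)
  have hp0 : 0 < ‖p‖ := by linarith
  have hr4 : ‖r‖ ≤ (M - M') / 2 * ‖p‖ := hrb.trans (by nlinarith)
  have hdecomp : t b' = (L a p - p) + (L a q - q) - r := by
    rw [htb', hpq, map_add]; abel
  have hLp : L a p - p ∈ F := F.sub_mem (hF _ hpF) hpF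
  have hLq : L a q - q ∈ Fᗮ := Fᗮ.sub_mem (hFp _ hqF) hqF
  have e1 : F.starProjection (t b') = (L a p - p) - F.starProjection r := by
    rw [hdecomp, map_sub, map_add, Submodule.starProjection_eq_self_iff.2 hLp,
      (Submodule.starProjection_apply_eq_zero_iff _).2 hLq, add_zero]
  have e2 : Fᗮ.starProjection (t b') = (L a q - q) - Fᗮ.starProjection r := by
    rw [hdecomp, map_sub, map_add, Submodule.starProjection_eq_self_iff.2 hLq,
      (Submodule.starProjection_apply_eq_zero_iff _).2 (F.le_orthogonal_orthogonal hLp), zero_add]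
  have n1 : M * ‖p‖ - ‖r‖ ≤ ‖F.starProjection (t b')‖ := by
    rw [e1, ← hFM p hpF]
    have := norm_sub_norm_le (L a p - p) (F.starProjection r)
    have := F.norm_starProjection_apply_le r
    linarith
  have n2 : ‖Fᗮ.starProjection (t b')‖ ≤ M' * ‖p‖ + ‖r‖ := by
    rw [e2]
    refine (norm_sub_le _ _).trans (add_le_add ?_ (Fᗮ.norm_starProjection_apply_le r))
    exact (hFpM q hqF).trans (by gcongr)
  refine ⟨b', fun h0 => ?_, fun x => (hcomm x).trans (by gcongr), by linarith, ?_⟩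
  · rw [h0, map_zero, norm_zero] at n1
    nlinarith
  · calc ‖t b'‖ ≤ ‖L a (t b) - t b‖ + ‖r‖ := by rw [htb']; exact norm_sub_le _ _
      _ ≤ M * ‖t b‖ + 2 * c * ‖t b‖ := add_le_add (hA _) hrb
      _ < ‖t b‖ := by nlinarith

theorem linear_part_eq_one [FiniteDimensional ℝ E] (ht : ∀ g h, t (g * h) = t g + L g (t h))
    (hfin : ∀ R : ℝ, {g | ‖t g‖ ≤ R}.Finite)
    {D : ℝ} (hD : ∀ x, ∃ g, ‖t g - x‖ ≤ D) {g : G} (hg : ∀ x, ‖L g x - x‖ ≤ 1 / 2 * ‖x‖) :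
    L g = 1 := by
  by_contra hne
  obtain ⟨a, ⟨ha1, ha⟩, hmin⟩ := exists_minimal_translation_part hfin
    (P := fun g => L g ≠ 1 ∧ ∀ x, ‖L g x - x‖ ≤ 1 / 2 * ‖x‖) ⟨g, hne, hg⟩
  obtain ⟨M, M', F, hM', hMM, ⟨x₀, hx₀, hx₀M⟩, hFbot, hA, hF, hFM, hFp, hFpM⟩ :=
    exists_displacement_splitting ha1
  have hM2 : M ≤ 1 / 2 := by
    have := ha x₀
    rw [hx₀M] at this
    exact le_of_mul_le_mul_right this (norm_pos_iff.2 hx₀)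
  set c := (M - M') / 8 with hc
  obtain ⟨y, hyF, hy⟩ := F.exists_mem_ne_zero_of_ne_bot hFbot
  set u := (‖y‖⁻¹ : ℝ) • y with hu
  have huF : u ∈ F := F.smul_mem _ hyF
  have hu1 : ‖u‖ = 1 := by simp [hu, norm_smul, hy]
  have hc0 : 0 < c := by linarith
  have hc2 : c ≤ 1 / 16 := by linarith
  have hexists : ∃ b, t b ≠ 0 ∧ (∀ x, ‖L b x - x‖ ≤ c * ‖x‖) ∧
      ‖Fᗮ.starProjection (t b)‖ ≤ ‖F.starProjection (t b)‖ := by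
    obtain ⟨b, s, hs, hbs, hb⟩ := exists_almost_translation ht hD u hc0
    have e : t b = s • u + (t b - s • u) := by abel
    have hsu : s • u ∈ F := F.smul_mem _ huF
    have hsun : ‖s • u‖ = s := by rw [norm_smul, hu1, mul_one, Real.norm_of_nonneg hs.le]
    have hcs : c * s ≤ s / 16 := by nlinarith
    have e1 : F.starProjection (t b) = s • u + F.starProjection (t b - s • u) := by
      conv_lhs => rw [e, map_add, Submodule.starProjection_eq_self_iff.2 hsu]
    have e2 : Fᗮ.starProjection (t b) = Fᗮ.starProjection (t b - s • u) := by
      conv_lhs => rw [e, map_add,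
        (Submodule.starProjection_apply_eq_zero_iff _).2 (F.le_orthogonal_orthogonal hsu), zero_add]
    have n1 : s - s / 16 ≤ ‖F.starProjection (t b)‖ := by
      have h1 := norm_sub_le_norm_add (s • u) (F.starProjection (t b - s • u))
      have h2 := F.norm_starProjection_apply_le (t b - s • u)
      rw [e1]
      linarith
    have n2 : ‖Fᗮ.starProjection (t b)‖ ≤ s / 16 := by
      have h2 := Fᗮ.norm_starProjection_apply_le (t b - s • u)
      rw [e2]
      linarith
    refine ⟨b, fun h0 => ?_, hb, by linarith⟩
    rw [h0, map_zero, norm_zero] at n1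
    linarith
  obtain ⟨b, ⟨hb0, hB, hbF⟩, hbmin⟩ := exists_minimal_translation_part hfin hexists
  have hab : L b ≠ 1 → ‖t a‖ ≤ ‖t b‖ := fun h =>
    hmin b ⟨h, fun x => (hB x).trans (by gcongr; linarith)⟩
  obtain ⟨b', h1, h2, h3, hlt⟩ := commutator_shortens ht hM' hMM hM2 (by rw [hc]; ring) hA hF hFM
    hFp hFpM hab hb0 hB hbF
  exact (hbmin b' ⟨h1, h2, h3⟩).not_gt hlt

theorem finiteIndex_ker_linear_part [FiniteDimensional ℝ E]
    (hL : ∀ g, (∀ x, ‖L g x - x‖ ≤ 1 / 2 * ‖x‖) → L g = 1) : L.ker.FiniteIndex := by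
  have hfin : Finite L.range := by
    by_contra hinf
    rw [not_finite_iff_infinite] at hinf
    let f : ℕ ↪ L.range := Infinite.natEmbedding _
    choose g hg using fun k => (f k).2
    obtain ⟨i, hi⟩ := exists_frequently_linear_part_near L g (by norm_num : (0 : ℝ) < 1 / 2)
    obtain ⟨j, hj, hij⟩ := (hi.and_eventually (eventually_gt_atTop i)).exists
    have h1 := hL _ hj
    rw [map_mul, map_inv, mul_inv_eq_one, hg, hg] at h1
    exact hij.ne' (f.injective (Subtype.ext h1))
  have : Finite (G ⧸ L.ker) :=
    Finite.of_equiv _ (QuotientGroup.quotientKerEquivRange L).symm.toEquiv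
  exact Subgroup.finiteIndex_of_finite_quotient

/-- The lattice of translation vectors of elements with trivial linear part. -/
def translationLattice (ht : ∀ g h, t (g * h) = t g + L g (t h)) : Submodule ℤ E :=
  AddSubgroup.toIntSubmodule
    { carrier := t '' L.ker
      zero_mem' := ⟨1, one_mem _, by simpa using ht 1 1⟩
      add_mem' := by
        rintro _ _ ⟨g, hg, rfl⟩ ⟨h, hh, rfl⟩
        exact ⟨g * h, mul_mem hg hh, by rw [ht, MonoidHom.mem_ker.1 hg]; rfl⟩
      neg_mem' := by
        rintro _ ⟨g, hg, rfl⟩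
        refine ⟨g⁻¹, inv_mem hg, ?_⟩
        have h1 := ht g g⁻¹
        have h2 : t 1 = 0 := by simpa using ht 1 1
        rw [mul_inv_cancel, h2, MonoidHom.mem_ker.1 hg] at h1
        exact (neg_eq_of_add_eq_zero_right h1.symm).symm }

theorem mem_translationLattice {ht : ∀ g h, t (g * h) = t g + L g (t h)} {v : E} :
    v ∈ translationLattice ht ↔ ∃ g ∈ L.ker, t g = v := Iff.rfl

theorem discreteTopology_translationLattice (ht : ∀ g h, t (g * h) = t g + L g (t h))
    (hfin : ∀ R : ℝ, {g | ‖t g‖ ≤ R}.Finite) : DiscreteTopology (translationLattice ht) := by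
  by_cases hex : ∃ g, t g ≠ 0
  · obtain ⟨g, hg, hmin⟩ := exists_minimal_translation_part hfin hex
    refine DiscreteTopology.of_forall_le_norm (norm_pos_iff.2 hg) ?_
    rintro ⟨_, h, hh, rfl⟩ hne
    exact hmin h fun h0 => hne (Subtype.ext h0)
  · push Not at hex
    refine DiscreteTopology.of_forall_le_norm one_pos ?_
    rintro ⟨_, h, hh, rfl⟩ hne
    exact absurd (Subtype.ext (hex h)) hne

theorem span_translationLattice [FiniteDimensional ℝ E]
    (ht : ∀ g h, t (g * h) = t g + L g (t h))
    {D : ℝ} (hD : ∀ x, ∃ g, ‖t g - x‖ ≤ D)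
    (hL : ∀ g, (∀ x, ‖L g x - x‖ ≤ 1 / 2 * ‖x‖) → L g = 1) :
    Submodule.span ℝ (translationLattice ht : Set E) = ⊤ := by
  set W := Submodule.span ℝ (translationLattice ht : Set E) with hW
  by_contra hne
  have hperp : Wᗮ ≠ ⊥ := fun h => hne (Submodule.orthogonal_eq_bot_iff.1 h)
  obtain ⟨y, hyW, hy⟩ := Wᗮ.exists_mem_ne_zero_of_ne_bot hperp
  set u := (‖y‖⁻¹ : ℝ) • y with hu
  have huW : u ∈ Wᗮ := Wᗮ.smul_mem _ hyW
  have hu1 : ‖u‖ = 1 := by simp [hu, norm_smul, hy]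
  obtain ⟨g, s, hs, hgs, hg⟩ := exists_almost_translation ht hD u (by norm_num : (0 : ℝ) < 1 / 2)
  have hgW : t g ∈ W := Submodule.subset_span (mem_translationLattice.2 ⟨g, hL g hg, rfl⟩)
  have h0 : ⟪t g, u⟫ = 0 := (Submodule.mem_orthogonal W u).1 huW _ hgW
  have h1 := abs_real_inner_le_norm (t g - s • u) u
  rw [inner_sub_left, h0, inner_smul_left, real_inner_self_eq_norm_sq, hu1] at h1
  simp only [conj_trivial, one_pow, mul_one, zero_sub, abs_neg, abs_of_pos hs] at h1
  linarith

theorem nonempty_ker_mulEquiv [FiniteDimensional ℝ E]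
    (ht : ∀ g h, t (g * h) = t g + L g (t h))
    (hinj : ∀ g, L g = 1 → t g = 0 → g = 1)
    (hfin : ∀ R : ℝ, {g | ‖t g‖ ≤ R}.Finite) {D : ℝ} (hD : ∀ x, ∃ g, ‖t g - x‖ ≤ D)
    {m : ℕ} (hm : Module.finrank ℝ E = m) :
    Nonempty (L.ker ≃* Multiplicative (Fin m → ℤ)) := by
  have := discreteTopology_translationLattice ht hfin
  have : IsZLattice ℝ (translationLattice ht) :=
    ⟨span_translationLattice ht hD fun _ => linear_part_eq_one ht hfin hD⟩
  have hrank : Module.finrank ℤ (translationLattice ht) = m := by rw [ZLattice.rank ℝ, hm]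
  let e₂ : translationLattice ht ≃ₗ[ℤ] (Fin m → ℤ) :=
    (Module.finBasisOfFinrankEq ℤ (translationLattice ht) hrank).equivFun
  let f : L.ker →* Multiplicative (translationLattice ht) :=
    MonoidHom.mk' (fun g => Multiplicative.ofAdd ⟨t g, g, g.2, rfl⟩) fun g h => by
      rw [← ofAdd_add]
      congr 1
      refine Subtype.ext ?_
      change t (g * h) = t g + t h
      rw [ht, MonoidHom.mem_ker.1 g.2]
      rfl
  have hf : Function.Bijective f := by
    refine ⟨(injective_iff_map_eq_one f).2 fun g hg => ?_, fun v => ?_⟩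
    · exact Subtype.ext (hinj g g.2 (congrArg Subtype.val (congrArg Multiplicative.toAdd hg)))
    · obtain ⟨g, hg, hgv⟩ := v.toAdd.2
      exact ⟨⟨g, hg⟩, congrArg Multiplicative.ofAdd (Subtype.ext hgv)⟩
  exact ⟨(MulEquiv.ofBijective f hf).trans (AddEquiv.toMultiplicative e₂.toAddEquiv)⟩

end

section
variable {E : Type*} [NormedAddCommGroup E] [NormedSpace ℝ E] {G : Type*} [Group G] [MulAction G E]

/-- The linear part of a single element of an isometric action on a normed space. -/
noncomputable def linearPartEquiv (hiso : ∀ g : G, Isometry (fun x : E => g • x)) (g : G) :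
    E ≃ₗᵢ[ℝ] E :=
  (IsometryEquiv.mk (MulAction.toPerm g) (hiso g)).toRealLinearIsometryEquiv

theorem linearPartEquiv_apply (hiso : ∀ g : G, Isometry (fun x : E => g • x)) (g : G) (x : E) :
    linearPartEquiv hiso g x = g • x - g • (0 : E) :=
  IsometryEquiv.toRealLinearIsometryEquiv_apply _ x

/-- The linear part of an isometric action on a normed space. -/
noncomputable def linearPart (hiso : ∀ g : G, Isometry (fun x : E => g • x)) :
    G →* (E ≃ₗᵢ[ℝ] E) :=
  MonoidHom.mk' (linearPartEquiv hiso) fun g h => by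
    ext x
    change linearPartEquiv hiso (g * h) x = linearPartEquiv hiso g (linearPartEquiv hiso h x)
    rw [linearPartEquiv_apply hiso h, map_sub]
    simp only [linearPartEquiv_apply, mul_smul, sub_sub_sub_cancel_right]

theorem linearPart_apply (hiso : ∀ g : G, Isometry (fun x : E => g • x)) (g : G) (x : E) :
    linearPart hiso g x = g • x - g • (0 : E) :=
  linearPartEquiv_apply hiso g x

end

/-- first Bieberbach theorem: Let `Γ` be a crystallographic
group, i.e. a group acting faithfully, isometrically, properly discontinuously
and cocompactly on `ℝ^m`. Then the subgroup `A₀` of pure translations in `Γ` is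
normal, free abelian of rank `m`, and of finite index (so `1 → A₀ → Γ → T → 1`
with `T` finite). -/
theorem stmt19 (m : ℕ) (G : Type*) [Group G]
    [MulAction G (EuclideanSpace ℝ (Fin m))]
    [FaithfulSMul G (EuclideanSpace ℝ (Fin m))]
    (hiso : ∀ g : G, Isometry (fun x : EuclideanSpace ℝ (Fin m) => g • x))
    (hpd : ∀ K : Set (EuclideanSpace ℝ (Fin m)), IsCompact K →
      {g : G | ((fun x => g • x) '' K ∩ K).Nonempty}.Finite)
    (hcc : ∃ K : Set (EuclideanSpace ℝ (Fin m)), IsCompact K ∧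
      ∀ x, ∃ g : G, ∃ y ∈ K, g • y = x) :
    (transSub m G).Normal ∧
    Nonempty (↥(transSub m G) ≃* Multiplicative (Fin m → ℤ)) ∧
    (transSub m G).FiniteIndex := by
  have hsmul : ∀ (g : G) (x), g • x = linearPart hiso g x + g • 0 := fun g x => by
    rw [linearPart_apply, sub_add_cancel]
  have ht : ∀ g h : G, (g * h) • (0 : EuclideanSpace ℝ (Fin m)) =
      g • 0 + linearPart hiso g (h • 0) := fun g h => by
    rw [mul_smul, hsmul g (h • 0), add_comm]
  have hker : transSub m G = (linearPart hiso).ker := by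
    ext g
    rw [MonoidHom.mem_ker]
    constructor
    · rintro ⟨v, hv⟩
      ext1 x
      rw [linearPart_apply, hv, hv]
      simp
    · intro h
      exact ⟨g • 0, fun x => by rw [hsmul, h]; rfl⟩
  have hinj : ∀ g : G, linearPart hiso g = 1 → g • (0 : EuclideanSpace ℝ (Fin m)) = 0 → g = 1 :=
    fun g h1 h2 => eq_of_smul_eq_smul (α := EuclideanSpace ℝ (Fin m)) fun x => by
      rw [hsmul, h1, h2, one_smul, add_zero]
      rfl
  have hfin : ∀ R : ℝ, {g : G | ‖g • (0 : EuclideanSpace ℝ (Fin m))‖ ≤ R}.Finite := fun R => by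
    refine (hpd (Metric.closedBall 0 R) (isCompact_closedBall 0 R)).subset fun g hg => ?_
    have hg' : ‖g • (0 : EuclideanSpace ℝ (Fin m))‖ ≤ R := hg
    exact ⟨g • 0, ⟨0, by simpa using (norm_nonneg _).trans hg', rfl⟩, by simpa using hg'⟩
  obtain ⟨K, hK, hcov⟩ := hcc
  obtain ⟨D, hD⟩ := hK.isBounded.exists_norm_le
  have hdense : ∀ x, ∃ g : G, ‖g • (0 : EuclideanSpace ℝ (Fin m)) - x‖ ≤ D := fun x => by
    obtain ⟨g, y, hy, rfl⟩ := hcov x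
    refine ⟨g, ?_⟩
    rw [← dist_eq_norm, (hiso g).dist_eq, dist_zero_left]
    exact hD y hy
  rw [hker]
  exact ⟨MonoidHom.normal_ker _, nonempty_ker_mulEquiv ht hinj hfin hdense (by simp),
    finiteIndex_ker_linear_part fun _ => linear_part_eq_one ht hfin hdense⟩
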